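/- Let n ≥ 1 and 0 < p < n, and set p* = np/(n−p). There is a constant C = C(p,n) such that for every ball B ⊆ ℝⁿ of radius r, every measurable function u : 2B → ℝ, and every Hajlasz gradient g of u on 2B, one has inf_{c ∈ ℝ} ( ⨍_B |u − c|^{p*} dm )^{1/p*} ≤ C · r · ( ⨍_{2B} g^p dm )^{1/p}, where ⨍ denotes the average (the integral divided by the Lebesgue measure of the domain of integration) and 2B is the ball concentric with B of twice the radius. -/

import Mathlib

open MeasureTheory Metric Set ENNReal NNReal

noncomputable section

/-- `g` is a Hajlasz gradient of `u` on `U ⊆ ℝⁿ`: `g` is measurable, nonnegative, and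
off a set of measure zero `|u x - u y| ≤ ‖x - y‖ (g x + g y)` for `x, y ∈ U`. -/
def IsHajlaszGradientOn (n : ℕ) (u g : EuclideanSpace ℝ (Fin n) → ℝ)
    (U : Set (EuclideanSpace ℝ (Fin n))) : Prop :=
  Measurable g ∧ (∀ x, 0 ≤ g x) ∧
    ∃ E : Set (EuclideanSpace ℝ (Fin n)), MeasureTheory.volume E = 0 ∧
      ∀ x ∈ U \ E, ∀ y ∈ U \ E, |u x - u y| ≤ ‖x - y‖ * (g x + g y)

/-- Points with small gradient exist in every ball of suitable radius. -/
lemma hajlasz_exists_good (n : ℕ) (hn : 1 ≤ n) (p q : ℝ) (hp0 : 0 < p)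
    (hq0 : 0 < q) (hq1 : q < 1) (hqn : (2:ℝ) ^ p * q ^ n = 1)
    (x₀ : EuclideanSpace ℝ (Fin n)) (r : ℝ) (hr : 0 < r)
    (g : EuclideanSpace ℝ (Fin n) → ℝ) (hg : Measurable g)
    (E : Set (EuclideanSpace ℝ (Fin n))) (hE : volume E = 0) (T : ℝ) (hT : 0 < T)
    (hI : ∫⁻ y in ball x₀ (2 * r), ENNReal.ofReal (g y) ^ p <
      ENNReal.ofReal (T ^ p * ((1 - q) / 2) ^ n) * volume (ball x₀ (2 * r)))
    (k : ℕ) (x : EuclideanSpace ℝ (Fin n))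
    (hx : ball x (r * (1 - q) * q ^ k) ⊆ ball x₀ (2 * r)) :
    ∃ y ∈ ball x (r * (1 - q) * q ^ k), y ∉ E ∧ g y ≤ T * 2 ^ k := by
  by_contra! hcon
  have hq' : 0 < 1 - q := by linarith
  have hρ : 0 < r * (1 - q) * q ^ k := by positivity
  have hTk : 0 < T * 2 ^ k := by positivity
  refine absurd hI (not_lt.mpr ?_)
  have h1 : ENNReal.ofReal ((T * 2 ^ k) ^ p) * volume (ball x (r * (1 - q) * q ^ k)) ≤
      ∫⁻ y in ball x₀ (2 * r), ENNReal.ofReal (g y) ^ p := by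
    calc ENNReal.ofReal ((T * 2 ^ k) ^ p) * volume (ball x (r * (1 - q) * q ^ k))
        = ∫⁻ y in ball x (r * (1 - q) * q ^ k), ENNReal.ofReal ((T * 2 ^ k) ^ p) := by
          rw [setLIntegral_const]
      _ ≤ ∫⁻ y in ball x (r * (1 - q) * q ^ k), ENNReal.ofReal (g y) ^ p := by
          apply lintegral_mono_ae
          have hEae : ∀ᵐ y ∂(volume.restrict (ball x (r * (1 - q) * q ^ k))), y ∉ E :=
            ae_restrict_of_ae (measure_eq_zero_iff_ae_notMem.mp hE)
          filter_upwards [hEae, ae_restrict_mem measurableSet_ball] with y hy hyb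
          rw [← ENNReal.ofReal_rpow_of_pos hTk]
          exact ENNReal.rpow_le_rpow (ENNReal.ofReal_le_ofReal (hcon y hyb hy).le) hp0.le
      _ ≤ _ := lintegral_mono_set hx
  refine le_trans (le_of_eq ?_) h1
  rw [Measure.addHaar_ball_of_pos volume x₀ (by positivity : 0 < 2 * r),
    Measure.addHaar_ball_of_pos volume x hρ, ← mul_assoc, ← mul_assoc,
    ← ENNReal.ofReal_mul (by positivity), ← ENNReal.ofReal_mul (by positivity)]
  congr 2
  rw [finrank_euclideanSpace_fin, Real.mul_rpow hT.le (by positivity), ← Real.rpow_natCast 2 k,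
    ← Real.rpow_mul (by norm_num), mul_comm (k:ℝ) p, Real.rpow_mul (by norm_num),
    Real.rpow_natCast]
  have : ((2:ℝ) ^ p) ^ k * (q ^ n) ^ k = 1 := by rw [← mul_pow, hqn, one_pow]
  have h2 : (q ^ k) ^ n = (q ^ n) ^ k := by rw [← pow_mul, ← pow_mul, mul_comm]
  rw [mul_pow (r * (1 - q)), mul_pow r, h2, mul_pow, div_pow]
  field_simp
  linear_combination (-1 : ℝ) * this

/-- Chaining estimate. -/
lemma hajlasz_chain (n : ℕ) (hn : 1 ≤ n) (p q : ℝ) (hp0 : 0 < p)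
    (hq0 : 0 < q) (hq1 : q < 1) (hq2 : 1 < 2 * q) (hqn : (2:ℝ) ^ p * q ^ n = 1)
    (x₀ : EuclideanSpace ℝ (Fin n)) (r : ℝ) (hr : 0 < r)
    (u g : EuclideanSpace ℝ (Fin n) → ℝ) (hg : Measurable g)
    (E : Set (EuclideanSpace ℝ (Fin n))) (hE : volume E = 0)
    (hug : ∀ x ∈ ball x₀ (2 * r) \ E, ∀ y ∈ ball x₀ (2 * r) \ E,
      |u x - u y| ≤ ‖x - y‖ * (g x + g y))
    (T : ℝ) (hT : 0 < T)
    (hI : ∫⁻ y in ball x₀ (2 * r), ENNReal.ofReal (g y) ^ p <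
      ENNReal.ofReal (T ^ p * ((1 - q) / 2) ^ n) * volume (ball x₀ (2 * r))) :
    ∃ c : ℝ, ∀ k : ℕ, ∀ x, x ∉ E → dist x x₀ < r * (1 + q ^ k) → g x ≤ T * 2 ^ k →
      |u x - c| ≤ (8 + 4 / (2 * q - 1)) * r * T * (2 * q) ^ k := by
  have key := hajlasz_exists_good n hn p q hp0 hq0 hq1 hqn x₀ r hr g hg E hE T hT hI
  have hq' : 0 < 1 - q := by linarith
  have hqq : 0 < 2 * q - 1 := by linarith
  obtain ⟨z, hz, hzE, hgz⟩ := key 0 x₀ (ball_subset_ball (by nlinarith))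
  have hz2 : z ∈ ball x₀ (2 * r) := ball_subset_ball (by nlinarith) hz
  refine ⟨u z, fun k => ?_⟩
  induction k with
  | zero =>
    intro x hxE hx hgx
    have hx2 : x ∈ ball x₀ (2 * r) := by
      rw [mem_ball]; simp only [pow_zero] at hx; linarith
    have h := hug x ⟨hx2, hxE⟩ z ⟨hz2, hzE⟩
    have hd : ‖x - z‖ ≤ 4 * r := by
      rw [← dist_eq_norm]
      have := dist_triangle_right x z x₀
      rw [mem_ball] at hx2 hz2
      linarith
    simp only [pow_zero, mul_one] at *
    have : ‖x - z‖ * (g x + g z) ≤ 4 * r * (2 * T) :=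
      (mul_le_mul_of_nonneg_left (by linarith : g x + g z ≤ 2 * T) (norm_nonneg _)).trans
        (mul_le_mul_of_nonneg_right hd (by positivity))
    have h4 : 0 ≤ 4 / (2 * q - 1) * r * T := by positivity
    nlinarith
  | succ k ih =>
    intro x hxE hx hgx
    have hqk : 0 < q ^ k := by positivity
    have hqk1 : q ^ k ≤ 1 := pow_le_one₀ hq0.le hq1.le
    have hsub : ball x (r * (1 - q) * q ^ k) ⊆ ball x₀ (r * (1 + q ^ k)) := by
      apply ball_subset_ball'
      rw [pow_succ] at hx
      nlinarith
    have hsub2 : ball x₀ (r * (1 + q ^ k)) ⊆ ball x₀ (2 * r) :=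
      ball_subset_ball (by nlinarith)
    obtain ⟨y, hy, hyE, hgy⟩ := key k x (hsub.trans hsub2)
    have h1 := ih y hyE (hsub hy) hgy
    have hρ : 0 < r * (1 - q) * q ^ k := by positivity
    have hxm : x ∈ ball x₀ (2 * r) := hsub2 (hsub (mem_ball_self hρ))
    have h2 := hug x ⟨hxm, hxE⟩ y ⟨hsub2 (hsub hy), hyE⟩
    have hd : ‖x - y‖ ≤ r * (1 - q) * q ^ k := by
      rw [← dist_eq_norm, dist_comm]; exact (mem_ball.mp hy).le
    have hTk : 0 < T * 2 ^ k := by positivity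
    have h3 : ‖x - y‖ * (g x + g y) ≤ r * (1 - q) * q ^ k * (4 * (T * 2 ^ k)) := by
      refine (mul_le_mul_of_nonneg_left (?_ : g x + g y ≤ 4 * (T * 2 ^ k)) (norm_nonneg _)).trans
        (mul_le_mul_of_nonneg_right hd (by positivity))
      rw [pow_succ] at hgx
      linarith
    have h4 : |u x - u z| ≤ |u x - u y| + |u y - u z| := abs_sub_le _ _ _
    have h5 : r * (1 - q) * q ^ k * (4 * (T * 2 ^ k)) = 4 * (1 - q) * (r * T * (2 * q) ^ k) := by
      rw [mul_pow]; ring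
    have hP : 0 < r * T * (2 * q) ^ k := by positivity
    have h6 : 4 * (1 - q) ≤ (8 + 4 / (2 * q - 1)) * (2 * q - 1) := by
      rw [add_mul, div_mul_cancel₀ _ hqq.ne']
      linarith
    have h7 := mul_le_mul_of_nonneg_right h6 hP.le
    rw [pow_succ]
    linarith

/-- Pointwise estimate. -/
lemma hajlasz_level (p q G T K : ℝ) (n : ℕ) (r V pstar : ℝ) (hp0 : 0 < p) (hq0 : 0 < q)
    (hs : ((2:ℝ) * q) ^ pstar = 2 ^ p) (hps : 0 < pstar) (hT : 0 < T) (hK : 0 ≤ K)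
    (hG : 0 ≤ G) (hV : 0 ≤ V)
    (h : ∀ k : ℕ, G ≤ T * 2 ^ k → V ≤ K * (2 * q) ^ k) :
    V ^ pstar ≤ K ^ pstar * (1 + (2 / T) ^ p * G ^ p) := by
  have hex : ∃ k : ℕ, G ≤ T * 2 ^ k := by
    obtain ⟨k, hk⟩ := pow_unbounded_of_one_lt (G / T) (by norm_num : (1:ℝ) < 2)
    exact ⟨k, by rw [div_lt_iff₀ hT] at hk; linarith⟩
  classical
  have hk := Nat.find_spec hex
  have hmin := fun m => @Nat.find_min _ _ hex m
  generalize Nat.find hex = k at hk hmin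
  have h1 : V ^ pstar ≤ (K * (2 * q) ^ k) ^ pstar := Real.rpow_le_rpow hV (h k hk) hps.le
  refine h1.trans ?_
  rw [Real.mul_rpow hK (by positivity)]
  refine mul_le_mul_of_nonneg_left ?_ (by positivity)
  have h2 : ((2 * q) ^ k) ^ pstar = ((2:ℝ) ^ k) ^ p := by
    rw [← Real.rpow_natCast (2 * q), ← Real.rpow_mul (by positivity), mul_comm (k:ℝ),
      Real.rpow_mul (by positivity), hs, ← Real.rpow_natCast 2 k, ← Real.rpow_mul (by norm_num),
      ← Real.rpow_mul (by norm_num), mul_comm]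
  rw [h2]
  have h0 : 0 ≤ (2 / T) ^ p * G ^ p := by positivity
  cases k with
  | zero => simp only [pow_zero, Real.one_rpow]; linarith
  | succ k =>
    have h3 := not_le.mp (hmin k (Nat.lt_succ_self k))
    rw [← Real.mul_rpow (by positivity) hG]
    have : ((2:ℝ) ^ (k+1)) ^ p ≤ (2 / T * G) ^ p := by
      refine Real.rpow_le_rpow (by positivity) ?_ hp0.le
      rw [pow_succ, div_mul_eq_mul_div, le_div_iff₀ hT]
      linarith
    linarith

lemma hajlasz_core (n : ℕ) (hn : 1 ≤ n) (p q pstar : ℝ) (hp0 : 0 < p) (hps : 0 < pstar)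
    (hs : ((2:ℝ) * q) ^ pstar = 2 ^ p)
    (hq0 : 0 < q) (hq1 : q < 1) (hq2 : 1 < 2 * q) (hqn : (2:ℝ) ^ p * q ^ n = 1)
    (x₀ : EuclideanSpace ℝ (Fin n)) (r : ℝ) (hr : 0 < r)
    (u g : EuclideanSpace ℝ (Fin n) → ℝ)
    (hug : IsHajlaszGradientOn n u g (ball x₀ (2 * r)))
    (T : ℝ) (hT : 0 < T)
    (hI : ∫⁻ y in ball x₀ (2 * r), ENNReal.ofReal (g y) ^ p <
      ENNReal.ofReal (T ^ p * ((1 - q) / 2) ^ n) * volume (ball x₀ (2 * r))) :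
    (⨅ c : ℝ, ((volume (ball x₀ r))⁻¹ *
                ∫⁻ y in ball x₀ r, ENNReal.ofReal |u y - c| ^ pstar) ^ (1 / pstar)) ≤
      ENNReal.ofReal ((8 + 4 / (2 * q - 1)) *
        (1 + 2 ^ p * (((1 - q) / 2) ^ n * 2 ^ n)) ^ (1 / pstar) * r * T) := by
  obtain ⟨hg, hg0, E, hE, hug⟩ := hug
  obtain ⟨c, hc⟩ := hajlasz_chain n hn p q hp0 hq0 hq1 hq2 hqn x₀ r hr u g hg E hE hug T hT hI
  refine (iInf_le _ c).trans ?_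
  have hq' : 0 < 1 - q := by linarith
  have hqq : 0 < 2 * q - 1 := by linarith
  set K := (8 + 4 / (2 * q - 1)) with hKdef
  have hK : 0 < K := by positivity
  set δ := ((1 - q) / 2) ^ n with hδ
  have hδ0 : 0 < δ := by positivity
  have hvol : volume (ball x₀ (2 * r)) = ENNReal.ofReal (2 ^ n) * volume (ball x₀ r) := by
    rw [Measure.addHaar_ball_of_pos volume x₀ (by positivity : 0 < 2 * r),
      Measure.addHaar_ball_of_pos volume x₀ hr, ← mul_assoc,
      ← ENNReal.ofReal_mul (by positivity), finrank_euclideanSpace_fin, mul_pow]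
  have hv0 : volume (ball x₀ r) ≠ 0 := (measure_ball_pos volume x₀ hr).ne'
  have hvt : volume (ball x₀ r) ≠ ∞ := measure_ball_lt_top.ne
  have h1 : ∫⁻ y in ball x₀ r, ENNReal.ofReal |u y - c| ^ pstar ≤
      ∫⁻ y in ball x₀ r, ENNReal.ofReal ((K * r * T) ^ pstar) *
        (1 + ENNReal.ofReal ((2 / T) ^ p) * ENNReal.ofReal (g y) ^ p) := by
    apply lintegral_mono_ae
    have hEae : ∀ᵐ y ∂(volume.restrict (ball x₀ r)), y ∉ E :=
      ae_restrict_of_ae (measure_eq_zero_iff_ae_notMem.mp hE)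
    filter_upwards [hEae, ae_restrict_mem measurableSet_ball] with y hy hyb
    have := hajlasz_level p q (g y) T (K * r * T) n r |u y - c| pstar hp0 hq0 hs hps hT
      (by positivity) (hg0 y) (abs_nonneg _) (fun k hk => hc k y hy (by
        have : 0 < r * q ^ k := by positivity
        have := mem_ball.mp hyb
        linarith) hk)
    rw [ENNReal.ofReal_rpow_of_nonneg (abs_nonneg _) hps.le,
      ENNReal.ofReal_rpow_of_nonneg (hg0 y) hp0.le, ← ENNReal.ofReal_one,
      ← ENNReal.ofReal_mul (by positivity),
      ← ENNReal.ofReal_add (by norm_num) (mul_nonneg (by positivity) (Real.rpow_nonneg (hg0 y) _)),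
      ← ENNReal.ofReal_mul (by positivity)]
    exact ENNReal.ofReal_le_ofReal this
  have hgm : Measurable fun y => ENNReal.ofReal (g y) ^ p := by fun_prop
  have h2 : ∫⁻ y in ball x₀ r, ENNReal.ofReal |u y - c| ^ pstar ≤
      ENNReal.ofReal ((K * r * T) ^ pstar * (1 + 2 ^ p * (δ * 2 ^ n))) * volume (ball x₀ r) := by
    refine h1.trans ?_
    rw [lintegral_const_mul _ (by fun_prop), lintegral_add_left (by fun_prop),
      lintegral_const_mul _ hgm, setLIntegral_const, one_mul, ENNReal.ofReal_mul (by positivity),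
      mul_assoc (ENNReal.ofReal ((K * r * T) ^ pstar))]
    refine mul_le_mul_right ?_ _
    rw [ENNReal.ofReal_add (by norm_num) (by positivity), add_mul, ENNReal.ofReal_one, one_mul]
    refine add_le_add_right ?_ _
    calc ENNReal.ofReal ((2 / T) ^ p) * ∫⁻ y in ball x₀ r, ENNReal.ofReal (g y) ^ p
        ≤ ENNReal.ofReal ((2 / T) ^ p) *
          (ENNReal.ofReal (T ^ p * δ) * volume (ball x₀ (2 * r))) := by
          gcongr
          exact (lintegral_mono_set (ball_subset_ball (by linarith))).trans hI.le
      _ = _ := by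
          rw [hvol, ← mul_assoc, ← mul_assoc, ← ENNReal.ofReal_mul (by positivity),
            ← ENNReal.ofReal_mul (by positivity)]
          congr 2
          rw [Real.div_rpow (by norm_num) hT.le]
          have : T ^ p ≠ 0 := by positivity
          field_simp
  calc ((volume (ball x₀ r))⁻¹ *
                ∫⁻ y in ball x₀ r, ENNReal.ofReal |u y - c| ^ pstar) ^ (1 / pstar)
      ≤ ((volume (ball x₀ r))⁻¹ * (ENNReal.ofReal ((K * r * T) ^ pstar *
          (1 + 2 ^ p * (δ * 2 ^ n))) * volume (ball x₀ r))) ^ (1 / pstar) := by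
        gcongr
    _ = (ENNReal.ofReal ((K * r * T) ^ pstar * (1 + 2 ^ p * (δ * 2 ^ n)))) ^ (1 / pstar) := by
        rw [mul_comm, mul_assoc, ENNReal.mul_inv_cancel hv0 hvt, mul_one]
    _ = _ := by
        rw [ENNReal.ofReal_rpow_of_nonneg (by positivity) (by positivity),
          Real.mul_rpow (by positivity) (by positivity), ← Real.rpow_mul (by positivity),
          mul_one_div_cancel hps.ne', Real.rpow_one]
        congr 1
        ring

/-- **Proposition 2.4.** Sobolev–Poincaré inequality for Hajlasz gradients on balls:
for `0 < p < n` and `p* = np/(n-p)`,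
`inf_c (⨍_B |u - c|^{p*})^{1/p*} ≤ C r (⨍_{2B} g^p)^{1/p}`. -/
theorem sobolev_poincare_hajlasz
    (n : ℕ) (hn : 1 ≤ n) (p : ℝ) (hp0 : 0 < p) (hpn : p < n)
    (pstar : ℝ) (hpstar : pstar = n * p / (n - p)) :
    ∃ C : ℝ, 0 < C ∧
      ∀ (x₀ : EuclideanSpace ℝ (Fin n)) (r : ℝ), 0 < r →
        ∀ u : EuclideanSpace ℝ (Fin n) → ℝ, Measurable u →
          ∀ g : EuclideanSpace ℝ (Fin n) → ℝ,
            IsHajlaszGradientOn n u g (ball x₀ (2 * r)) →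
            (⨅ c : ℝ, ((volume (ball x₀ r))⁻¹ *
                ∫⁻ y in ball x₀ r, ENNReal.ofReal |u y - c| ^ pstar) ^ (1 / pstar)) ≤
              ENNReal.ofReal (C * r) *
                ((volume (ball x₀ (2 * r)))⁻¹ *
                  ∫⁻ y in ball x₀ (2 * r), ENNReal.ofReal (g y) ^ p) ^ (1 / p) := by
  have hn0 : (0:ℝ) < n := by exact_mod_cast hn
  have hnp : (0:ℝ) < n - p := by linarith
  have hps : 0 < pstar := by rw [hpstar]; positivity
  set q : ℝ := 2 ^ (-p / n) with hqdef
  have hpn1 : p / n < 1 := by rw [div_lt_one hn0]; exact hpn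
  have hpn0 : 0 < p / n := by positivity
  have hq0 : 0 < q := by positivity
  have hq1 : q < 1 := Real.rpow_lt_one_of_one_lt_of_neg (by norm_num) (by rw [neg_div]; linarith)
  have h2q : 2 * q = (2:ℝ) ^ (1 + -p / n) := by
    rw [Real.rpow_add (by norm_num), Real.rpow_one]
  have hq2 : 1 < 2 * q := by
    rw [h2q]
    exact Real.one_lt_rpow (by norm_num) (by rw [neg_div]; linarith)
  have hqn : (2:ℝ) ^ p * q ^ n = 1 := by
    rw [hqdef, ← Real.rpow_natCast, ← Real.rpow_mul (by norm_num), div_mul_cancel₀ _ hn0.ne',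
      ← Real.rpow_add (by norm_num)]
    simp
  have hs : ((2:ℝ) * q) ^ pstar = 2 ^ p := by
    rw [h2q, ← Real.rpow_mul (by norm_num), hpstar]
    congr 1
    field_simp
    ring
  have hq' : 0 < 1 - q := by linarith
  have hqq : 0 < 2 * q - 1 := by linarith
  set C' : ℝ := (8 + 4 / (2 * q - 1)) *
        (1 + 2 ^ p * (((1 - q) / 2) ^ n * 2 ^ n)) ^ (1 / pstar) with hC'
  have hC'0 : 0 < C' := by positivity
  set δ := ((1 - q) / 2) ^ n with hδ
  have hδ0 : 0 < δ := by positivity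
  set M : ℝ := δ ^ (-1 / p) with hM
  have hM0 : 0 < M := by positivity
  have hMδ : M ^ p * δ = 1 := by
    rw [hM, ← Real.rpow_mul hδ0.le, div_mul_cancel₀ _ hp0.ne', Real.rpow_neg_one,
      inv_mul_cancel₀ hδ0.ne']
  refine ⟨C' * M, by positivity, ?_⟩
  intro x₀ r hr u hu g hug
  have hCr : 0 < C' * M * r := by positivity
  have hv0 : volume (ball x₀ (2 * r)) ≠ 0 := (measure_ball_pos volume x₀ (by positivity)).ne'
  have hvt : volume (ball x₀ (2 * r)) ≠ ∞ := measure_ball_lt_top.ne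
  set I := ∫⁻ y in ball x₀ (2 * r), ENNReal.ofReal (g y) ^ p with hIdef
  set J := ((volume (ball x₀ (2 * r)))⁻¹ * I) ^ (1 / p) with hJ
  by_cases hJt : J = ∞
  · rw [hJt, ENNReal.mul_top (by simpa using hCr)]
    exact le_top
  have hJp : I = J ^ p * volume (ball x₀ (2 * r)) := by
    rw [hJ, ← ENNReal.rpow_mul, one_div_mul_cancel hp0.ne', ENNReal.rpow_one, mul_comm,
      ← mul_assoc, ENNReal.mul_inv_cancel hv0 hvt, one_mul]
  obtain ⟨A, hA0, hA⟩ : ∃ A : ℝ, 0 ≤ A ∧ J = ENNReal.ofReal A :=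
    ⟨J.toReal, ENNReal.toReal_nonneg, (ENNReal.ofReal_toReal hJt).symm⟩
  rw [hA, ← ENNReal.ofReal_mul hCr.le]
  refine ENNReal.le_of_forall_pos_le_add ?_
  intro ε hε _
  have hε' : (0:ℝ) < ε := hε
  set e : ℝ := ε / (C' * M * r) with he
  have he0 : 0 < e := by positivity
  have hT : 0 < M * (A + e) := by positivity
  have := hajlasz_core n hn p q pstar hp0 hps hs hq0 hq1 hq2 hqn x₀ r hr u g hug
    (M * (A + e)) hT (by
      rw [← hIdef, hJp, hA]
      refine ENNReal.mul_lt_mul_left hv0 hvt ?_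
      rw [ENNReal.ofReal_rpow_of_nonneg hA0 hp0.le]
      have h1 : (M * (A + e)) ^ p * δ = (A + e) ^ p := by
        rw [Real.mul_rpow hM0.le (by positivity)]
        linear_combination (A + e) ^ p * hMδ
      rw [h1]
      refine (ENNReal.ofReal_lt_ofReal_iff (by positivity)).mpr ?_
      exact Real.rpow_lt_rpow hA0 (by linarith) hp0)
  refine this.trans (le_of_eq ?_)
  rw [← ENNReal.ofReal_coe_nnreal, ← ENNReal.ofReal_add (by positivity) hε'.le]
  congr 1
  have : C' * M * r * e = ε := by rw [he]; field_simp
  linear_combination this
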